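/- arXiv:1707.06754 — 2 statements merged into one kernel-verified Lean document; each statement's English description precedes it below -/
import Mathlib

section
/- Let n ≥ 1, let Ω ⊆ ℝ^n be a nonempty bounded open set, let 1 < p < ∞, and let V : Ω → ℝ be a C² function with V(x) ≥ 0 and ΔV(x) < 0 for all x ∈ Ω. Suppose there exists a constant C ≥ 0 such that for all smooth compactly supported complex-valued functions u on Ω one has C ∫_Ω |ΔV| |u|^p dx ≤ p(p-1) ∫_{{x ∈ Ω : u(x) ≠ 0}} V |u|^{p-2} |∇u|² dx. Then for all smooth compactly supported complex-valued functions u on Ω one has (1+C) · (∫_Ω |ΔV| |u|^p dx)^{1/p} ≤ p · (∫_Ω (V^p / |ΔV|^{p-1}) |Δu|^p dx)^{1/p}. -/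
/-!
Let `w = √(|u|² + ε²) - ε`, a smooth nonnegative regularization of `|u|`. Three facts about `w`
carry the proof.

* Kato's inequality `Δw ≥ -|Δu|` (`neg_norm_lap_le_lap_regAbs`).
* `|∇w|² ≤ (2/ε) w |∇u|²` (`gradNorm_regAbs_sq_le`), so that `w^{p-2} |∇w|²` is harmless near the
  zeros of `w` even for `p < 2`.
* `w` is itself an admissible test function in the hypothesis. The hypothesis is applied to `w`,
  not to `u`: for complex-valued `u` and `p > 2` the chain rule for `|u|^p` produces
  `|∇|u||²` and not the larger `|∇u|²`.

Integrating `V` against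
`Δ((w + δ)^p) = p (w + δ)^{p-1} Δw + p (p-1) (w + δ)^{p-2} |∇w|²` by parts and letting `δ → 0`
gives
`∫ |ΔV| w^p + p (p-1) ∫ V w^{p-2} |∇w|² ≤ p ∫ V w^{p-1} |Δu|` (`weighted_ineq_eps`).
The hypothesis for `w` bounds the middle term below by `C ∫ |ΔV| w^p`, and `ε → 0` yields
`(1 + C) ∫ |ΔV| |u|^p ≤ p ∫ V |u|^{p-1} |Δu|` (`weighted_ineq`). Hölder's inequality with exponents
`p/(p-1)` and `p` (`holder_weighted`) and division by `(∫ |ΔV| |u|^p)^{(p-1)/p}` conclude.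

Since `V` is only controlled on `Ω`, it is replaced by a global `C²` function `W ≥ 0` which agrees
with it near the support of `u`, and all integrals are taken over that compact support.
-/

open MeasureTheory Real

/-- The Euclidean Laplacian of a function on `ℝ^n`. -/
noncomputable def lap {n : ℕ} {E : Type*} [NormedAddCommGroup E] [NormedSpace ℝ E]
    (f : EuclideanSpace ℝ (Fin n) → E) (x : EuclideanSpace ℝ (Fin n)) : E :=
  ∑ i : Fin n,
    fderiv ℝ (fun y => fderiv ℝ f y (EuclideanSpace.single i 1)) x (EuclideanSpace.single i 1)

/-- The Euclidean norm of the gradient of a function on `ℝ^n`. -/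
noncomputable def gradNorm {n : ℕ} {E : Type*} [NormedAddCommGroup E] [NormedSpace ℝ E]
    (f : EuclideanSpace ℝ (Fin n) → E) (x : EuclideanSpace ℝ (Fin n)) : ℝ :=
  Real.sqrt (∑ i : Fin n, ‖fderiv ℝ f x (EuclideanSpace.single i 1)‖ ^ 2)


/-! ### The Laplacian: continuity, locality, Green's identity, chain rule -/

lemma lap_continuous {n : ℕ} {E : Type*} [NormedAddCommGroup E] [NormedSpace ℝ E]
    {f : EuclideanSpace ℝ (Fin n) → E} (hf : ContDiff ℝ 2 f) : Continuous (lap f) := by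
  unfold lap
  refine continuous_finsetSum _ fun i _ => ?_
  have h1 : ContDiff ℝ 1 (fun y => fderiv ℝ f y (EuclideanSpace.single i 1)) :=
    (hf.fderiv_right (by norm_num)).clm_apply contDiff_const
  exact (h1.continuous_fderiv (by norm_num)).clm_apply continuous_const

lemma lap_eq_zero_of_notMem {n : ℕ} {E : Type*} [NormedAddCommGroup E] [NormedSpace ℝ E]
    {f : EuclideanSpace ℝ (Fin n) → E} {x : EuclideanSpace ℝ (Fin n)} (hx : x ∉ tsupport f) :
    lap f x = 0 := by
  unfold lap
  refine Finset.sum_eq_zero fun i _ => ?_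
  rw [fderiv_of_notMem_tsupport]
  · simp
  · exact fun h => hx (tsupport_fderiv_apply_subset ℝ _ h)

lemma lap_congr {n : ℕ} {E : Type*} [NormedAddCommGroup E] [NormedSpace ℝ E]
    {f g : EuclideanSpace ℝ (Fin n) → E} {x : EuclideanSpace ℝ (Fin n)}
    (h : f =ᶠ[nhds x] g) : lap f x = lap g x := by
  unfold lap
  refine Finset.sum_congr rfl fun i _ => ?_
  have h2 : (fun y => fderiv ℝ f y (EuclideanSpace.single i 1)) =ᶠ[nhds x]
      (fun y => fderiv ℝ g y (EuclideanSpace.single i 1)) := by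
    filter_upwards [h.fderiv (𝕜 := ℝ)] with y hy
    rw [hy]
  rw [h2.fderiv_eq]

/-- Green's second identity without boundary terms. -/
lemma integral_mul_lap_comm {n : ℕ} {W φ : EuclideanSpace ℝ (Fin n) → ℝ} (hW : ContDiff ℝ 2 W)
    (hφ : ContDiff ℝ 2 φ) (hs : HasCompactSupport φ) :
    ∫ x, W x * lap φ x = ∫ x, lap W x * φ x := by
  have key : ∀ (f : EuclideanSpace ℝ (Fin n) → ℝ) (e : EuclideanSpace ℝ (Fin n)),
      ContDiff ℝ 2 f → ContDiff ℝ 1 (fun y => fderiv ℝ f y e) := fun f e hf =>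
    (hf.fderiv_right (by norm_num)).clm_apply contDiff_const
  have key2 : ∀ (f : EuclideanSpace ℝ (Fin n) → ℝ) (e : EuclideanSpace ℝ (Fin n)),
      ContDiff ℝ 1 f → Continuous (fun y => fderiv ℝ f y e) := fun f e hf =>
    (hf.continuous_fderiv (by norm_num)).clm_apply continuous_const
  have hint : ∀ f g : EuclideanSpace ℝ (Fin n) → ℝ, Continuous f → Continuous g →
      HasCompactSupport g → Integrable (fun x => f x * g x) := fun f g hf hg hc =>
    (hf.mul hg).integrable_of_hasCompactSupport hc.mul_left
  simp only [lap, Finset.mul_sum, Finset.sum_mul]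
  have hs1 := fun e : EuclideanSpace ℝ (Fin n) => hs.fderiv_apply (𝕜 := ℝ) e
  rw [integral_finsetSum, integral_finsetSum]
  · refine Finset.sum_congr rfl fun i _ => ?_
    set e : EuclideanSpace ℝ (Fin n) := EuclideanSpace.single i 1
    have cW := hW.continuous
    have cφ := hφ.continuous
    have W1 := key W e hW
    have φ1 := key φ e hφ
    rw [integral_mul_fderiv_eq_neg_fderiv_mul_of_integrable
        (hint _ _ W1.continuous φ1.continuous (hs1 e))
        (hint _ _ cW (key2 _ e φ1) ((hs1 e).fderiv_apply (𝕜 := ℝ) e))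
        (hint _ _ cW φ1.continuous (hs1 e))
        (fun x _ => (hW.differentiable (by norm_num)) x)
        (fun x _ => (φ1.differentiable (by norm_num)) x),
      integral_mul_fderiv_eq_neg_fderiv_mul_of_integrable
        (hint _ _ (key2 _ e W1) cφ hs)
        (hint _ _ W1.continuous φ1.continuous (hs1 e))
        (hint _ _ W1.continuous cφ hs)
        (fun x _ => (W1.differentiable (by norm_num)) x)
        (fun x _ => (hφ.differentiable (by norm_num)) x), neg_neg]
  · exact fun i _ => hint _ _ (key2 _ _ (key W _ hW)) hφ.continuous hs
  · exact fun i _ => hint _ _ hW.continuous (key2 _ _ (key φ _ hφ)) ((hs1 _).fderiv_apply (𝕜 := ℝ) _)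

/-- Chain rule for `Δ((w + δ)^p)` with `w + δ > 0`. -/
lemma lap_rpow {n : ℕ} {w : EuclideanSpace ℝ (Fin n) → ℝ} (hw : ContDiff ℝ 2 w) {δ p : ℝ}
    (hpos : ∀ x, 0 < w x + δ) (c : ℝ) (x : EuclideanSpace ℝ (Fin n)) :
    lap (fun y => (w y + δ) ^ p - c) x =
      p * (w x + δ) ^ (p - 1) * lap w x +
        p * (p - 1) * ((w x + δ) ^ (p - 2) * gradNorm w x ^ 2) := by
  have hg : gradNorm w x ^ 2 = ∑ i : Fin n, (fderiv ℝ w x (EuclideanSpace.single i 1)) ^ 2 := by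
    rw [gradNorm, Real.sq_sqrt (Finset.sum_nonneg fun i _ => by positivity)]
    simp
  have hd : ∀ y, HasFDerivAt w (fderiv ℝ w y) y := fun y =>
    ((hw.differentiable (by norm_num)) y).hasFDerivAt
  rw [hg]
  simp only [lap, Finset.mul_sum, ← Finset.sum_add_distrib]
  refine Finset.sum_congr rfl fun i _ => ?_
  set e : EuclideanSpace ℝ (Fin n) := EuclideanSpace.single i 1
  have h1 : (fun y => fderiv ℝ (fun y => (w y + δ) ^ p - c) y e) =
      fun y => p * ((w y + δ) ^ (p - 1) * fderiv ℝ w y e) := by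
    ext y
    have := (((hd y).add_const δ).rpow_const (p := p) (Or.inl (hpos y).ne')).sub_const c
    rw [this.fderiv]
    simp [mul_assoc]
  have h2 : HasFDerivAt (fun y => fderiv ℝ w y e) (fderiv ℝ (fun y => fderiv ℝ w y e) x) x := by
    have : ContDiff ℝ 1 (fun y => fderiv ℝ w y e) :=
      (hw.fderiv_right (by norm_num)).clm_apply contDiff_const
    exact ((this.differentiable (by norm_num)) x).hasFDerivAt
  have h3 := (((hd x).add_const δ).rpow_const (p := p - 1) (Or.inl (hpos x).ne'))
  have h4 : HasFDerivAt (fun y => p * ((w y + δ) ^ (p - 1) * fderiv ℝ w y e)) _ x :=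
    (h3.mul h2).const_mul p
  rw [h1, h4.fderiv]
  have : p - 1 - 1 = p - 2 := by ring
  simp [this]
  ring

/-! ### The regularized modulus -/

/-- The smooth regularization `√(|u|² + ε²) - ε` of `|u|`. -/
noncomputable def regAbs {n : ℕ} (u : EuclideanSpace ℝ (Fin n) → ℂ) (ε : ℝ)
    (x : EuclideanSpace ℝ (Fin n)) : ℝ := √(‖u x‖ ^ 2 + ε ^ 2) - ε

section
variable {n : ℕ} {u : EuclideanSpace ℝ (Fin n) → ℂ} {ε : ℝ}

lemma regAbs_contDiff (hu : ContDiff ℝ (⊤ : ℕ∞) u) (hε : 0 < ε) :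
    ContDiff ℝ (⊤ : ℕ∞) (regAbs u ε) :=
  (((hu.norm_sq ℝ).add contDiff_const).sqrt fun x => by positivity).sub contDiff_const

lemma regAbs_nonneg (x : EuclideanSpace ℝ (Fin n)) : 0 ≤ regAbs u ε x := by
  rw [regAbs, sub_nonneg]
  exact Real.le_sqrt_of_sq_le (by nlinarith [sq_nonneg ‖u x‖])

lemma regAbs_eq_zero (hε : 0 < ε) {x : EuclideanSpace ℝ (Fin n)} (hx : u x = 0) :
    regAbs u ε x = 0 := by
  simp [regAbs, hx, Real.sqrt_sq hε.le]

lemma tsupport_regAbs_subset (hε : 0 < ε) : tsupport (regAbs u ε) ⊆ tsupport u :=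
  closure_mono fun _ hx hu => hx (regAbs_eq_zero hε hu)

lemma fderiv_regAbs (hu : ContDiff ℝ (⊤ : ℕ∞) u) (hε : 0 < ε) (x e : EuclideanSpace ℝ (Fin n)) :
    fderiv ℝ (regAbs u ε) x e = inner ℝ (u x) (fderiv ℝ u x e) / √(‖u x‖ ^ 2 + ε ^ 2) := by
  have hd : HasFDerivAt u (fderiv ℝ u x) x := ((hu.differentiable (by simp)) x).hasFDerivAt
  have := (((hd.norm_sq).add_const (ε ^ 2)).sqrt (by positivity)).sub_const ε
  have h2 : HasFDerivAt (regAbs u ε) _ x := this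
  rw [h2.fderiv]
  simp
  field_simp

/-- `|∇w|² ≤ (2/ε) w |∇u|²` for `w = √(|u|² + ε²) - ε`: the gradient vanishes with `w`, at a
rate which makes `w^{p-2} |∇w|²` bounded for every `p > 1`. -/
lemma gradNorm_regAbs_sq_le (hu : ContDiff ℝ (⊤ : ℕ∞) u) (hε : 0 < ε)
    (x : EuclideanSpace ℝ (Fin n)) :
    gradNorm (regAbs u ε) x ^ 2 ≤ 2 / ε * regAbs u ε x * gradNorm u x ^ 2 := by
  rw [gradNorm, gradNorm, Real.sq_sqrt (Finset.sum_nonneg fun i _ => by positivity),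
    Real.sq_sqrt (Finset.sum_nonneg fun i _ => by positivity), Finset.mul_sum]
  refine Finset.sum_le_sum fun i _ => ?_
  rw [fderiv_regAbs hu hε]
  set a := fderiv ℝ u x (EuclideanSpace.single i 1)
  have hcs := abs_real_inner_le_norm (u x) a
  have hgε : ε ≤ √(‖u x‖ ^ 2 + ε ^ 2) := by
    have := regAbs_nonneg (u := u) (ε := ε) x
    rw [regAbs] at this; linarith
  rw [regAbs]
  set g := √(‖u x‖ ^ 2 + ε ^ 2) with hgdef
  have hg2 : g ^ 2 = ‖u x‖ ^ 2 + ε ^ 2 := Real.sq_sqrt (by positivity)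
  have hg0 : 0 < g := hε.trans_le hgε
  have h1 : (inner ℝ (u x) a) ^ 2 ≤ ‖u x‖ ^ 2 * ‖a‖ ^ 2 := by
    rw [← mul_pow, ← sq_abs]; gcongr
  rw [Real.norm_eq_abs, sq_abs, div_pow, div_le_iff₀ (by positivity)]
  refine h1.trans ?_
  have h2 : ‖u x‖ ^ 2 = (g - ε) * (g + ε) := by nlinarith
  rw [h2]
  have h3 : (g + ε) ≤ 2 / ε * g ^ 2 := by
    rw [div_mul_eq_mul_div, le_div_iff₀ hε]; nlinarith
  calc (g - ε) * (g + ε) * ‖a‖ ^ 2 ≤ (g - ε) * (2 / ε * g ^ 2) * ‖a‖ ^ 2 := by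
        have : 0 ≤ g - ε := by linarith
        gcongr
    _ = _ := by ring

/-- Kato's inequality `Δ√(|u|² + ε²) ≥ -|Δu|`. -/
lemma neg_norm_lap_le_lap_regAbs (hu : ContDiff ℝ (⊤ : ℕ∞) u) (hε : 0 < ε)
    (x : EuclideanSpace ℝ (Fin n)) : -‖lap u x‖ ≤ lap (regAbs u ε) x := by
  have hd : ∀ y, HasFDerivAt u (fderiv ℝ u y) y := fun y =>
    ((hu.differentiable (by simp)) y).hasFDerivAt
  set g := √(‖u x‖ ^ 2 + ε ^ 2) with hgdef
  have hg2 : g ^ 2 = ‖u x‖ ^ 2 + ε ^ 2 := Real.sq_sqrt (by positivity)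
  have hg0 : 0 < g := Real.sqrt_pos.2 (by positivity)
  have hug : ‖u x‖ ≤ g := by
    refine Real.le_sqrt_of_sq_le ?_
    nlinarith
  have hi : inner ℝ (u x) (lap u x) / g ≤ lap (regAbs u ε) x := by
    simp only [lap, inner_sum, Finset.sum_div]
    refine Finset.sum_le_sum fun i _ => ?_
    set e : EuclideanSpace ℝ (Fin n) := EuclideanSpace.single i 1
    have h1 : (fun y => fderiv ℝ (regAbs u ε) y e) =
        fun y => inner ℝ (u y) (fderiv ℝ u y e) * (√(‖u y‖ ^ 2 + ε ^ 2))⁻¹ := by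
      ext y
      rw [fderiv_regAbs hu hε, div_eq_mul_inv]
    have h2 : HasFDerivAt (fun y => fderiv ℝ u y e) (fderiv ℝ (fun y => fderiv ℝ u y e) x) x := by
      have : ContDiff ℝ 1 (fun y => fderiv ℝ u y e) :=
        (hu.fderiv_right (by norm_cast)).clm_apply contDiff_const
      exact ((this.differentiable (by norm_num)) x).hasFDerivAt
    have h3 := (((hd x).norm_sq).add_const (ε ^ 2)).sqrt (by positivity)
    have h4 := ((hd x).inner ℝ h2).mul ((hasDerivAt_inv hg0.ne').comp_hasFDerivAt x h3)
    have h4' : HasFDerivAt (fun y => inner ℝ (u y) (fderiv ℝ u y e) *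
      (√(‖u y‖ ^ 2 + ε ^ 2))⁻¹) _ x := h4
    rw [h1, h4'.fderiv]
    set a := fderiv ℝ u x e with ha
    set b := fderiv ℝ (fun y => fderiv ℝ u y e) x e with hb
    have hcs := abs_real_inner_le_norm (u x) a
    have hcs2 : (inner ℝ (u x) a) ^ 2 ≤ g ^ 2 * ‖a‖ ^ 2 := by
      rw [← mul_pow, ← sq_abs]
      gcongr
      exact hcs.trans (by gcongr)
    simp [-Complex.inner, ← hgdef, ← ha, ← hb]
    rw [← sub_nonneg]
    have : g⁻¹ * (inner ℝ (u x) b + ‖a‖ ^ 2) -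
        (inner ℝ (u x) a * ((g ^ 2)⁻¹ * (g⁻¹ * 2⁻¹ * (2 * inner ℝ (u x) a))) +
          inner ℝ (u x) b / g) = (g ^ 2 * ‖a‖ ^ 2 - (inner ℝ (u x) a) ^ 2) / g ^ 3 := by
      field_simp
      ring
    rw [this]
    exact div_nonneg (by linarith) (by positivity)
  refine le_trans ?_ hi
  rw [le_div_iff₀ hg0]
  have := abs_real_inner_le_norm (u x) (lap u x)
  have := neg_le_of_abs_le this
  nlinarith [norm_nonneg (lap u x)]

end

/-! ### The weighted inequality for `|u|` -/

lemma gradNorm_sq_continuous {n : ℕ} {E : Type*} [NormedAddCommGroup E] [NormedSpace ℝ E]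
    {f : EuclideanSpace ℝ (Fin n) → E} (hf : ContDiff ℝ 1 f) :
    Continuous fun x => gradNorm f x ^ 2 := by
  unfold gradNorm
  refine (Real.continuous_sqrt.comp (continuous_finsetSum _ fun i _ => ?_)).pow 2
  exact ((hf.continuous_fderiv (by norm_num)).clm_apply continuous_const).norm.pow 2

/-- Green's identity and Kato's inequality for the weight `W` and `(w + δ)^p - δ^p`, where `w`
regularizes `|u|`. -/
lemma weighted_ineq_delta {n : ℕ} {p : ℝ} (hp : 1 < p) {W : EuclideanSpace ℝ (Fin n) → ℝ}
    (hW : ContDiff ℝ 2 W) (hW0 : ∀ x, 0 ≤ W x) {u : EuclideanSpace ℝ (Fin n) → ℂ}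
    (hu : ContDiff ℝ (⊤ : ℕ∞) u) (hc : HasCompactSupport u) {ε δ : ℝ} (hε : 0 < ε) (hδ : 0 < δ) :
    (∫ x in tsupport u, -lap W x * ((regAbs u ε x + δ) ^ p - δ ^ p)) +
      p * (p - 1) * (∫ x in tsupport u,
        W x * ((regAbs u ε x + δ) ^ (p - 2) * gradNorm (regAbs u ε) x ^ 2)) ≤
      p * ∫ x in tsupport u, W x * ((regAbs u ε x + δ) ^ (p - 1) * ‖lap u x‖) := by
  have hK : IsCompact (tsupport u) := hc
  have hw := regAbs_contDiff hu hε
  have hw2 : ContDiff ℝ 2 (regAbs u ε) := hw.of_le (by norm_cast)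
  have hu2 : ContDiff ℝ 2 u := hu.of_le (by norm_cast)
  have hpos : ∀ x, 0 < regAbs u ε x + δ := fun x => by
    have := regAbs_nonneg (u := u) (ε := ε) x
    linarith
  set w := regAbs u ε with hwdef
  set φ : EuclideanSpace ℝ (Fin n) → ℝ := fun y => (w y + δ) ^ p - δ ^ p with hφdef
  have hφ : ContDiff ℝ 2 φ :=
    ((hw2.add contDiff_const).rpow_const_of_ne fun x => (hpos x).ne').sub contDiff_const
  have hφK : tsupport φ ⊆ tsupport u := by
    refine closure_mono fun x hx hux => hx ?_
    simp [hφdef, hwdef, regAbs_eq_zero hε hux]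
  have hφc : HasCompactSupport φ := hK.of_isClosed_subset (isClosed_tsupport _) hφK
  have hgreen := integral_mul_lap_comm hW hφ hφc
  rw [← setIntegral_eq_integral_of_forall_compl_eq_zero (s := tsupport u),
    ← setIntegral_eq_integral_of_forall_compl_eq_zero (s := tsupport u)
      (f := fun x => lap W x * φ x)] at hgreen
  rotate_left
  · intro x hx
    rw [image_eq_zero_of_notMem_tsupport (fun h => hx (hφK h)), mul_zero]
  · intro x hx
    rw [lap_eq_zero_of_notMem (fun h => hx (hφK h)), mul_zero]
  have hI : ∀ f : EuclideanSpace ℝ (Fin n) → ℝ, Continuous f → IntegrableOn f (tsupport u) :=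
    fun f hf => hf.continuousOn.integrableOn_compact hK
  have cr : ∀ q : ℝ, Continuous fun x => (w x + δ) ^ q := fun q =>
    (hw2.continuous.add continuous_const).rpow_const fun x => Or.inl (hpos x).ne'
  have cg := gradNorm_sq_continuous (hw.of_le (m := 1) (by norm_cast))
  have i1 : IntegrableOn (fun x => W x * ((w x + δ) ^ (p - 2) * gradNorm w x ^ 2)) (tsupport u) :=
    hI _ (hW.continuous.mul ((cr (p - 2)).mul cg))
  have i2 : IntegrableOn (fun x => W x * ((w x + δ) ^ (p - 1) * ‖lap u x‖)) (tsupport u) :=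
    hI _ (hW.continuous.mul ((cr (p - 1)).mul (lap_continuous hu2).norm))
  have i3 : IntegrableOn (fun x => W x * lap φ x) (tsupport u) :=
    hI _ (hW.continuous.mul (lap_continuous hφ))
  have hmono : ∫ x in tsupport u,
      (p * (p - 1) * (W x * ((w x + δ) ^ (p - 2) * gradNorm w x ^ 2)) -
        p * (W x * ((w x + δ) ^ (p - 1) * ‖lap u x‖))) ≤ ∫ x in tsupport u, W x * lap φ x := by
    refine setIntegral_mono ((i1.const_mul _).sub (i2.const_mul _)) i3 fun x => ?_
    simp only [hφdef]
    rw [lap_rpow hw2 hpos]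
    have hkato := neg_norm_lap_le_lap_regAbs hu hε x
    have h0 : 0 ≤ p * W x * (w x + δ) ^ (p - 1) :=
      mul_nonneg (mul_nonneg (by linarith) (hW0 x)) (Real.rpow_nonneg (hpos x).le _)
    have := mul_le_mul_of_nonneg_left hkato h0
    linarith
  rw [integral_sub (i1.const_mul _) (i2.const_mul _), integral_const_mul, integral_const_mul,
    hgreen] at hmono
  simp only [neg_mul, integral_neg]
  linarith

/-- The limit `δ → 0` of `weighted_ineq_delta`. -/
lemma weighted_ineq_eps {n : ℕ} {p : ℝ} (hp : 1 < p) {W : EuclideanSpace ℝ (Fin n) → ℝ}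
    (hW : ContDiff ℝ 2 W) (hW0 : ∀ x, 0 ≤ W x) {u : EuclideanSpace ℝ (Fin n) → ℂ}
    (hu : ContDiff ℝ (⊤ : ℕ∞) u) (hc : HasCompactSupport u) {ε : ℝ} (hε : 0 < ε) :
    (∫ x in tsupport u, -lap W x * regAbs u ε x ^ p) +
      p * (p - 1) * (∫ x in tsupport u,
        W x * (regAbs u ε x ^ (p - 2) * gradNorm (regAbs u ε) x ^ 2)) ≤
      p * ∫ x in tsupport u, W x * (regAbs u ε x ^ (p - 1) * ‖lap u x‖) := by
  have hK : IsCompact (tsupport u) := hc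
  have hw := regAbs_contDiff hu hε
  have cw : Continuous (regAbs u ε) := hw.continuous
  have hu2 : ContDiff ℝ 2 u := hu.of_le (by norm_cast)
  have cg := gradNorm_sq_continuous (hw.of_le (m := 1) (by norm_cast))
  have cgu := gradNorm_sq_continuous (hu.of_le (m := 1) (by norm_cast))
  have w0 := regAbs_nonneg (u := u) (ε := ε)
  have hbd := gradNorm_regAbs_sq_le hu hε
  set w := regAbs u ε with hwdef
  have t1 : Filter.Tendsto (fun δ : ℝ => ∫ x in tsupport u, -lap W x * ((w x + δ) ^ p - δ ^ p))
      (nhdsWithin 0 (Set.Ioi 0)) (nhds (∫ x in tsupport u, -lap W x * w x ^ p)) := by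
    have : Continuous fun δ : ℝ => ∫ x in tsupport u, -lap W x * ((w x + δ) ^ p - δ ^ p) := by
      refine continuous_parametric_integral_of_continuous ?_ hK
      refine ((lap_continuous hW).comp continuous_snd).neg.mul
        ((((cw.comp continuous_snd).add continuous_fst).rpow_const ?_).sub
        (continuous_fst.rpow_const ?_)) <;> exact fun _ => Or.inr (by linarith)
    have h := this.tendsto 0
    simp only [add_zero, Real.zero_rpow (by linarith : p ≠ 0), sub_zero] at h
    exact h.mono_left nhdsWithin_le_nhds
  have t2 : Filter.Tendsto (fun δ : ℝ => ∫ x in tsupport u,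
      W x * ((w x + δ) ^ (p - 1) * ‖lap u x‖)) (nhdsWithin 0 (Set.Ioi 0))
      (nhds (∫ x in tsupport u, W x * (w x ^ (p - 1) * ‖lap u x‖))) := by
    have : Continuous fun δ : ℝ => ∫ x in tsupport u,
        W x * ((w x + δ) ^ (p - 1) * ‖lap u x‖) := by
      refine continuous_parametric_integral_of_continuous ?_ hK
      refine (hW.continuous.comp continuous_snd).mul
        ((((cw.comp continuous_snd).add continuous_fst).rpow_const ?_).mul
        ((lap_continuous hu2).comp continuous_snd).norm)
      exact fun _ => Or.inr (by linarith)
    have h := this.tendsto 0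
    simp only [add_zero] at h
    exact h.mono_left nhdsWithin_le_nhds
  have t3 : Filter.Tendsto (fun δ : ℝ => ∫ x in tsupport u,
      W x * ((w x + δ) ^ (p - 2) * gradNorm w x ^ 2)) (nhdsWithin 0 (Set.Ioi 0))
      (nhds (∫ x in tsupport u, W x * (w x ^ (p - 2) * gradNorm w x ^ 2))) := by
    refine tendsto_integral_filter_of_dominated_convergence
      (fun x => W x * (2 / ε * ((w x + 1) ^ (p - 1) * gradNorm u x ^ 2))) ?_ ?_ ?_ ?_
    · filter_upwards [self_mem_nhdsWithin] with δ hδ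
      refine (hW.continuous.mul (Continuous.mul ?_ cg)).aestronglyMeasurable
      refine (cw.add continuous_const).rpow_const fun x => Or.inl ?_
      have := w0 x
      have : (0 : ℝ) < δ := hδ
      exact (by linarith : 0 < w x + δ).ne'
    · filter_upwards [Ioo_mem_nhdsGT (zero_lt_one' ℝ)] with δ hδ
      refine ae_of_all _ fun x => ?_
      have hx := w0 x
      have hpos : 0 < w x + δ := by linarith [hδ.1]
      have hW0x := hW0 x
      rw [Real.norm_of_nonneg (by positivity)]
      refine mul_le_mul_of_nonneg_left ?_ hW0x
      have e1 : (w x + δ) ^ (p - 1) = (w x + δ) ^ (p - 2) * (w x + δ) := by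
        rw [← Real.rpow_add_one hpos.ne']; congr 1; ring
      calc (w x + δ) ^ (p - 2) * gradNorm w x ^ 2
          ≤ (w x + δ) ^ (p - 2) * (2 / ε * w x * gradNorm u x ^ 2) := by
            gcongr; exact hbd x
        _ ≤ (w x + δ) ^ (p - 2) * (2 / ε * (w x + δ) * gradNorm u x ^ 2) := by
            gcongr; linarith [hδ.1]
        _ = 2 / ε * ((w x + δ) ^ (p - 1) * gradNorm u x ^ 2) := by rw [e1]; ring
        _ ≤ _ := by
            have := hδ.2.le
            gcongr
    · refine ContinuousOn.integrableOn_compact hK ?_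
      refine (hW.continuous.mul (continuous_const.mul
        (((cw.add continuous_const).rpow_const ?_).mul cgu))).continuousOn
      exact fun _ => Or.inr (by linarith)
    · refine ae_of_all _ fun x => ?_
      rcases (w0 x).eq_or_lt with h | h
      · have h0 : gradNorm w x ^ 2 = 0 := by
          have := hbd x
          rw [← h] at this
          simp only [mul_zero, zero_mul] at this
          exact le_antisymm this (sq_nonneg _)
        simp [h0]
      · refine Filter.Tendsto.mono_left ?_ nhdsWithin_le_nhds
        have : Filter.Tendsto (fun δ : ℝ => w x + δ) (nhds 0) (nhds (w x)) := by
          have hc : Continuous fun δ : ℝ => w x + δ := by fun_prop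
          simpa using hc.tendsto 0
        exact ((this.rpow_const (Or.inl h.ne')).mul_const _).const_mul _
  refine le_of_tendsto_of_tendsto (t1.add (t3.const_mul (p * (p - 1)))) (t2.const_mul p) ?_
  filter_upwards [self_mem_nhdsWithin] with δ hδ
  exact weighted_ineq_delta hp hW hW0 hu hc hε hδ

/-- The limit `ε → 0`, after the gradient term has been traded for `C ∫ |ΔW| w^p` by means of the
hypothesis `hC` on the regularizations of `|u|`. -/
lemma weighted_ineq {n : ℕ} {p : ℝ} (hp : 1 < p) {W : EuclideanSpace ℝ (Fin n) → ℝ}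
    (hW : ContDiff ℝ 2 W) (hW0 : ∀ x, 0 ≤ W x) {u : EuclideanSpace ℝ (Fin n) → ℂ}
    (hu : ContDiff ℝ (⊤ : ℕ∞) u) (hc : HasCompactSupport u) {C : ℝ}
    (hC : ∀ ε > 0, C * ∫ x in tsupport u, -lap W x * regAbs u ε x ^ p ≤
      p * (p - 1) * (∫ x in tsupport u,
        W x * (regAbs u ε x ^ (p - 2) * gradNorm (regAbs u ε) x ^ 2))) :
    (1 + C) * (∫ x in tsupport u, -lap W x * ‖u x‖ ^ p) ≤
      p * ∫ x in tsupport u, W x * (‖u x‖ ^ (p - 1) * ‖lap u x‖) := by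
  have hK : IsCompact (tsupport u) := hc
  have hu2 : ContDiff ℝ 2 u := hu.of_le (by norm_cast)
  have cw : Continuous fun q : ℝ × EuclideanSpace ℝ (Fin n) => regAbs u q.1 q.2 := by
    unfold regAbs
    have := hu.continuous
    fun_prop
  have w0 : ∀ x, regAbs u 0 x = ‖u x‖ := fun x => by simp [regAbs]
  have t1 : Filter.Tendsto (fun ε : ℝ => ∫ x in tsupport u, -lap W x * regAbs u ε x ^ p)
      (nhdsWithin 0 (Set.Ioi 0)) (nhds (∫ x in tsupport u, -lap W x * ‖u x‖ ^ p)) := by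
    have : Continuous fun ε : ℝ => ∫ x in tsupport u, -lap W x * regAbs u ε x ^ p := by
      refine continuous_parametric_integral_of_continuous ?_ hK
      refine ((lap_continuous hW).comp continuous_snd).neg.mul (cw.rpow_const ?_)
      exact fun _ => Or.inr (by linarith)
    have h := this.tendsto 0
    simp only [w0] at h
    exact h.mono_left nhdsWithin_le_nhds
  have t2 : Filter.Tendsto (fun ε : ℝ => ∫ x in tsupport u,
      W x * (regAbs u ε x ^ (p - 1) * ‖lap u x‖)) (nhdsWithin 0 (Set.Ioi 0))
      (nhds (∫ x in tsupport u, W x * (‖u x‖ ^ (p - 1) * ‖lap u x‖))) := by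
    have : Continuous fun ε : ℝ => ∫ x in tsupport u,
        W x * (regAbs u ε x ^ (p - 1) * ‖lap u x‖) := by
      refine continuous_parametric_integral_of_continuous ?_ hK
      refine (hW.continuous.comp continuous_snd).mul
        ((cw.rpow_const ?_).mul ((lap_continuous hu2).comp continuous_snd).norm)
      exact fun _ => Or.inr (by linarith)
    have h := this.tendsto 0
    simp only [w0] at h
    exact h.mono_left nhdsWithin_le_nhds
  refine le_of_tendsto_of_tendsto (t1.const_mul (1 + C)) (t2.const_mul p) ?_
  filter_upwards [self_mem_nhdsWithin] with ε hε
  have h1 := weighted_ineq_eps hp hW hW0 hu hc hε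
  have h2 := hC ε hε
  linarith

/-! ### Localization and Hölder's inequality -/

/-- A `C²` nonnegative function on an open set agrees, near a given compact subset, with a `C²`
nonnegative function on the whole space. -/
lemma exists_global_extension {n : ℕ} {Ω K : Set (EuclideanSpace ℝ (Fin n))} (hΩ : IsOpen Ω)
    (hK : IsCompact K) (hKΩ : K ⊆ Ω) {V : EuclideanSpace ℝ (Fin n) → ℝ}
    (hV : ContDiffOn ℝ 2 V Ω) (hV0 : ∀ x ∈ Ω, 0 ≤ V x) :
    ∃ W : EuclideanSpace ℝ (Fin n) → ℝ, ContDiff ℝ 2 W ∧ (∀ x, 0 ≤ W x) ∧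
      ∀ x ∈ K, W =ᶠ[nhds x] V := by
  obtain ⟨T, hT, hKT, hTΩ⟩ := exists_compact_between hK hΩ hKΩ
  obtain ⟨χ, h1, h0, h01⟩ := exists_contMDiffMap_one_nhds_of_subset_interior
    (n := 2) (modelWithCornersSelf ℝ (EuclideanSpace ℝ (Fin n))) hK.isClosed hKT
  have hχ : ContDiff ℝ 2 χ := χ.contMDiff.contDiff
  refine ⟨fun x => χ x * V x, contDiff_iff_contDiffAt.2 fun x => ?_, fun x => ?_, fun x hx => ?_⟩
  · by_cases hx : x ∈ Ω
    · exact hχ.contDiffAt.mul (hV.contDiffAt (hΩ.mem_nhds hx))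
    · have hz : (fun x => χ x * V x) =ᶠ[nhds x] fun _ => 0 := by
        filter_upwards [hT.isClosed.isOpen_compl.mem_nhds (fun h => hx (hTΩ h))] with y hy
        rw [h0 y hy, zero_mul]
      exact contDiffAt_const.congr_of_eventuallyEq hz
  · by_cases hx : x ∈ T
    · exact mul_nonneg (h01 x).1 (hV0 x (hTΩ hx))
    · simp [h0 x hx]
  · have := (eventually_nhdsSet_iff_forall.1 h1) x hx
    filter_upwards [this] with y hy
    rw [hy, one_mul]

lemma gradNorm_ofReal {n : ℕ} {w : EuclideanSpace ℝ (Fin n) → ℝ} (hw : Differentiable ℝ w)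
    (x : EuclideanSpace ℝ (Fin n)) : gradNorm (fun y => (w y : ℂ)) x = gradNorm w x := by
  have h : HasFDerivAt (fun y => (w y : ℂ)) _ x :=
    Complex.ofRealCLM.hasFDerivAt.comp x (hw x).hasFDerivAt
  simp [gradNorm, h.fderiv]

lemma gradNorm_eq_zero_of_notMem {n : ℕ} {E : Type*} [NormedAddCommGroup E] [NormedSpace ℝ E]
    {f : EuclideanSpace ℝ (Fin n) → E} {x : EuclideanSpace ℝ (Fin n)} (hx : x ∉ tsupport f) :
    gradNorm f x = 0 := by
  simp [gradNorm, fderiv_of_notMem_tsupport ℝ hx]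

/-- Hölder's inequality with the exponents `p/(p-1)` and `p`, for
`W |u|^{p-1} |h| = (a^{(p-1)/p} |u|^{p-1}) (W a^{-(p-1)/p} |h|)`. -/
lemma holder_weighted {n : ℕ} {K : Set (EuclideanSpace ℝ (Fin n))} (hK : IsCompact K) {p : ℝ}
    (hp : 1 < p) {W a f h : EuclideanSpace ℝ (Fin n) → ℝ} (cW : Continuous W) (ca : Continuous a)
    (cf : Continuous f) (ch : Continuous h) (ha : ∀ x ∈ K, 0 < a x) (hW : ∀ x, 0 ≤ W x)
    (hf : ∀ x, 0 ≤ f x) (hh : ∀ x, 0 ≤ h x) :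
    ∫ x in K, W x * (f x ^ (p - 1) * h x) ≤
      (∫ x in K, a x * f x ^ p) ^ ((p - 1) / p) *
        (∫ x in K, W x ^ p / a x ^ (p - 1) * h x ^ p) ^ (1 / p) := by
  have hp0 : 0 < p := by linarith
  have hp1 : 0 < p - 1 := by linarith
  have hpq : (p / (p - 1)).HolderConjugate p :=
    (Real.HolderConjugate.conjExponent hp).symm
  have hKm := hK.measurableSet
  have hmem : ∀ (g : EuclideanSpace ℝ (Fin n) → ℝ) (q : ENNReal), ContinuousOn g K →
      MemLp g q (volume.restrict K) := by
    intro g q hg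
    have : IsFiniteMeasure (volume.restrict K) := ⟨by simpa using hK.measure_lt_top⟩
    obtain ⟨M, hM⟩ := hK.exists_bound_of_continuousOn hg
    exact MemLp.of_bound (hg.aestronglyMeasurable hKm) M (ae_restrict_of_forall_mem hKm hM)
  have cpow : ∀ r : ℝ, ContinuousOn (fun x => a x ^ r) K := fun r =>
    ca.continuousOn.rpow_const fun x hx => Or.inl (ha x hx).ne'
  have H := integral_mul_le_Lp_mul_Lq_of_nonneg (μ := volume.restrict K) hpq
    (f := fun x => a x ^ ((p - 1) / p) * f x ^ (p - 1))
    (g := fun x => W x * a x ^ (-((p - 1) / p)) * h x)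
    (ae_restrict_of_forall_mem hKm fun x hx => by
      have := ha x hx; have := hf x; simp only [Pi.zero_apply]; positivity)
    (ae_restrict_of_forall_mem hKm fun x hx => by
      have := ha x hx; have := hW x; have := hh x; simp only [Pi.zero_apply]; positivity)
    (hmem _ _ ((cpow _).mul (cf.rpow_const fun x => Or.inr hp1.le).continuousOn))
    (hmem _ _ ((cW.continuousOn.mul (cpow _)).mul ch.continuousOn))
  have e1 : ∫ x in K, a x ^ ((p - 1) / p) * f x ^ (p - 1) *
      (W x * a x ^ (-((p - 1) / p)) * h x) = ∫ x in K, W x * (f x ^ (p - 1) * h x) := by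
    refine setIntegral_congr_fun hKm fun x hx => ?_
    have hax := ha x hx
    have : a x ^ ((p - 1) / p) * a x ^ (-((p - 1) / p)) = 1 := by
      rw [← Real.rpow_add hax, add_neg_cancel, Real.rpow_zero]
    calc _ = (a x ^ ((p - 1) / p) * a x ^ (-((p - 1) / p))) * (W x * (f x ^ (p - 1) * h x)) := by
          ring
      _ = _ := by rw [this, one_mul]
  have e2 : ∫ x in K, (a x ^ ((p - 1) / p) * f x ^ (p - 1)) ^ (p / (p - 1)) =
      ∫ x in K, a x * f x ^ p := by
    refine setIntegral_congr_fun hKm fun x hx => ?_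
    have hax := ha x hx
    have hfx := hf x
    rw [Real.mul_rpow (by positivity) (by positivity), ← Real.rpow_mul hax.le,
      ← Real.rpow_mul hfx]
    have h1 : (p - 1) / p * (p / (p - 1)) = 1 := by field_simp
    have h2 : (p - 1) * (p / (p - 1)) = p := by field_simp
    rw [h1, h2, Real.rpow_one]
  have e3 : ∫ x in K, (W x * a x ^ (-((p - 1) / p)) * h x) ^ p =
      ∫ x in K, W x ^ p / a x ^ (p - 1) * h x ^ p := by
    refine setIntegral_congr_fun hKm fun x hx => ?_
    have hax := ha x hx
    have hWx := hW x
    have hhx := hh x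
    rw [Real.mul_rpow (by positivity) hhx, Real.mul_rpow hWx (by positivity),
      ← Real.rpow_mul hax.le]
    have h1 : -((p - 1) / p) * p = -(p - 1) := by field_simp
    rw [h1, Real.rpow_neg hax.le, div_eq_mul_inv]
  rw [e1, e2, e3, one_div_div] at H
  exact H

theorem rellich_lemma_one (n : ℕ) (hn : 1 ≤ n) (Ω : Set (EuclideanSpace ℝ (Fin n)))
    (hΩ : IsOpen Ω) (hne : Ω.Nonempty) (hbd : Bornology.IsBounded Ω) (p : ℝ) (hp : 1 < p)
    (V : EuclideanSpace ℝ (Fin n) → ℝ) (hV : ContDiffOn ℝ 2 V Ω)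
    (hVpos : ∀ x ∈ Ω, 0 ≤ V x) (hΔV : ∀ x ∈ Ω, lap V x < 0)
    (C : ℝ) (hC : 0 ≤ C)
    (hhyp : ∀ u : EuclideanSpace ℝ (Fin n) → ℂ, ContDiff ℝ (⊤ : ℕ∞) u → HasCompactSupport u →
      tsupport u ⊆ Ω →
      C * ∫ x in Ω, |lap V x| * ‖u x‖ ^ p ≤
        p * (p - 1) * ∫ x in Ω ∩ {x | u x ≠ 0}, V x * ‖u x‖ ^ (p - 2) * gradNorm u x ^ 2) :
    ∀ u : EuclideanSpace ℝ (Fin n) → ℂ, ContDiff ℝ (⊤ : ℕ∞) u → HasCompactSupport u →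
      tsupport u ⊆ Ω →
      (1 + C) * (∫ x in Ω, |lap V x| * ‖u x‖ ^ p) ^ (1 / p) ≤
        p * (∫ x in Ω, (V x ^ p / |lap V x| ^ (p - 1)) * ‖lap u x‖ ^ p) ^ (1 / p) := by
  intro u hu hc hs
  have hK : IsCompact (tsupport u) := hc
  have hKm := hK.measurableSet
  have hp0 : 0 < p := by linarith
  obtain ⟨W, hW, hW0, hWV⟩ := exists_global_extension hΩ hK hs hV hVpos
  have hu2 : ContDiff ℝ 2 u := hu.of_le (by norm_cast)
  have eV : ∀ x ∈ tsupport u, V x = W x := fun x hx => (hWV x hx).eq_of_nhds.symm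
  have eL : ∀ x ∈ tsupport u, |lap V x| = -lap W x := fun x hx => by
    rw [abs_of_neg (hΔV x (hs hx)), lap_congr (hWV x hx)]
  have hpos : ∀ x ∈ tsupport u, 0 < -lap W x := fun x hx => by
    rw [← eL x hx]; exact abs_pos.2 (hΔV x (hs hx)).ne
  -- All integrals over `Ω` reduce to integrals over the compact support of `u`.
  have red : ∀ f g : EuclideanSpace ℝ (Fin n) → ℝ, (∀ x ∉ tsupport u, f x = 0) →
      (∀ x ∈ tsupport u, f x = g x) → ∫ x in Ω, f x = ∫ x in tsupport u, g x := by
    intro f g h0 hfg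
    rw [setIntegral_eq_of_subset_of_forall_sdiff_eq_zero hΩ.measurableSet hs
      (fun x hx => h0 x hx.2)]
    exact setIntegral_congr_fun hKm hfg
  have key := weighted_ineq hp hW hW0 hu hc (C := C) (by
    intro ε hε
    have hw := regAbs_contDiff hu hε
    have hwd : Differentiable ℝ (regAbs u ε) := hw.differentiable (by simp)
    have hwK := tsupport_regAbs_subset (u := u) hε
    have hsub : tsupport (fun x => (regAbs u ε x : ℂ)) ⊆ tsupport u := by
      refine closure_mono fun x hx hux => hx ?_
      simp [regAbs_eq_zero hε hux]
    have hnorm : ∀ x, ‖(regAbs u ε x : ℂ)‖ = regAbs u ε x := fun x => by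
      rw [Complex.norm_real, Real.norm_of_nonneg (regAbs_nonneg x)]
    have H := hhyp (fun x => (regAbs u ε x : ℂ)) (Complex.ofRealCLM.contDiff.comp hw)
      (hK.of_isClosed_subset (isClosed_tsupport _) hsub) (hsub.trans hs)
    simp only [hnorm, gradNorm_ofReal hwd] at H
    rw [red _ (fun x => -lap W x * regAbs u ε x ^ p) (fun x hx => by
        rw [regAbs_eq_zero hε (image_eq_zero_of_notMem_tsupport hx),
          Real.zero_rpow hp0.ne', mul_zero])
      (fun x hx => by rw [eL x hx])] at H
    rw [← setIntegral_eq_of_subset_of_forall_sdiff_eq_zero hΩ.measurableSet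
        Set.inter_subset_left, red _ (fun x => W x * (regAbs u ε x ^ (p - 2) *
          gradNorm (regAbs u ε) x ^ 2))] at H
    · exact H
    · intro x hx
      rw [gradNorm_eq_zero_of_notMem (fun h => hx (hwK h))]
      simp
    · intro x hx
      rw [eV x hx, mul_assoc]
    · rintro x ⟨hx, hx'⟩
      -- The gradient of the regularization vanishes wherever the regularization does.
      have h0 : regAbs u ε x = 0 := by
        by_contra hne
        exact hx' ⟨hx, by simpa using hne⟩
      have := gradNorm_regAbs_sq_le hu hε x
      rw [h0, mul_zero, zero_mul] at this
      rw [le_antisymm this (sq_nonneg _), mul_zero])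
  have hold := holder_weighted hK hp (a := fun x => -lap W x) hW.continuous
    (lap_continuous hW).neg hu.continuous.norm (lap_continuous hu2).norm hpos hW0
    (fun x => norm_nonneg _) (fun x => norm_nonneg _)
  rw [red _ (fun x => -lap W x * ‖u x‖ ^ p) (fun x hx => by
        rw [image_eq_zero_of_notMem_tsupport hx, norm_zero, Real.zero_rpow hp0.ne', mul_zero])
      (fun x hx => by rw [eL x hx]),
    red _ (fun x => W x ^ p / (-lap W x) ^ (p - 1) * ‖lap u x‖ ^ p) (fun x hx => by
        rw [lap_eq_zero_of_notMem hx, norm_zero, Real.zero_rpow hp0.ne', mul_zero])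
      (fun x hx => by rw [eL x hx, eV x hx])]
  set A := ∫ x in tsupport u, -lap W x * ‖u x‖ ^ p with hA
  set B := ∫ x in tsupport u, W x ^ p / (-lap W x) ^ (p - 1) * ‖lap u x‖ ^ p with hB
  have hA0 : 0 ≤ A := setIntegral_nonneg hKm fun x hx =>
    mul_nonneg (hpos x hx).le (Real.rpow_nonneg (norm_nonneg _) _)
  have hB0 : 0 ≤ B := setIntegral_nonneg hKm fun x hx =>
    mul_nonneg (div_nonneg (Real.rpow_nonneg (hW0 x) _) (Real.rpow_nonneg (hpos x hx).le _))
      (Real.rpow_nonneg (norm_nonneg _) _)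
  rcases hA0.eq_or_lt with h | h
  · rw [← h, Real.zero_rpow (by positivity), mul_zero]
    positivity
  · have hAp : A = A ^ (1 / p) * A ^ ((p - 1) / p) := by
      rw [← Real.rpow_add h, ← add_div, add_sub_cancel, div_self hp0.ne', Real.rpow_one]
    have hq : 0 < A ^ ((p - 1) / p) := Real.rpow_pos_of_pos h _
    refine le_of_mul_le_mul_right ?_ hq
    calc (1 + C) * A ^ (1 / p) * A ^ ((p - 1) / p) = (1 + C) * A := by
          rw [mul_assoc, ← hAp]
      _ ≤ p * (A ^ ((p - 1) / p) * B ^ (1 / p)) :=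
          key.trans (mul_le_mul_of_nonneg_left hold hp0.le)
      _ = p * B ^ (1 / p) * A ^ ((p - 1) / p) := by ring
end

section
/- Let n ≥ 3 and let α ∈ ℝ satisfy α < 2 and n + α - 4 > 0. Then for every smooth compactly supported complex-valued function u on ℝ^n whose support does not contain the origin, one has ((n+α-4)²(n-α)²/16) · ∫_{ℝ^n} |x|^{α-4} |u|² dx ≤ ∫_{ℝ^n} |x|^α |Δu|² dx. -/
open MeasureTheory Real

/-- The `i`-th component of the vector field
`‖x‖^(α-2) Re(ū ∇u) + (n-2)/2 ‖x‖^(α-4) |u|² x`, with both weights written through the smooth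
function `‖x‖²`. -/
noncomputable def fluxField {n : ℕ} (α : ℝ) (u : EuclideanSpace ℝ (Fin n) → ℂ) (i : Fin n)
    (x : EuclideanSpace ℝ (Fin n)) : ℝ :=
  (‖x‖ ^ 2) ^ ((α - 4) / 2) *
    (‖x‖ ^ 2 * inner ℝ (u x) (fderiv ℝ u x (EuclideanSpace.single i 1)) +
      ((n : ℝ) - 2) / 2 * (x i * ‖u x‖ ^ 2))

/-- A function vanishing off a compact set away from the origin inherits the regularity it has on
the complement of the origin. -/
lemma contDiff_of_vanish {E : Type*} [NormedAddCommGroup E] [NormedSpace ℝ E]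
    {k : WithTop ℕ∞} {K : Set E} (hK : IsCompact K) (h0 : (0 : E) ∉ K) {F : E → ℝ}
    (hF : ∀ x, x ≠ 0 → ContDiffAt ℝ k F x) (hv : ∀ x, x ∉ K → F x = 0) :
    ContDiff ℝ k F ∧ HasCompactSupport F := by
  refine ⟨contDiff_iff_contDiffAt.2 fun x => ?_, HasCompactSupport.intro hK fun x hx => hv x hx⟩
  by_cases hx : x = 0
  · have : F =ᶠ[nhds x] fun _ => 0 := by
      filter_upwards [hK.isClosed.isOpen_compl.mem_nhds (by rw [hx]; exact h0)] with y hy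
      exact hv y hy
    exact contDiffAt_const.congr_of_eventuallyEq this
  · exact hF x hx

/-- The algebraic core: `ρ = ‖x‖²`, `W = ‖x‖^(α-4)`, and `v`, `p i`, `q i`, `L` stand for the
values of `u`, `∂ᵢu`, `∂ᵢ²u` and `Δu` at `x`; the sum on the right is the divergence of
`fluxField`. -/
lemma pointwise_ineq {n : ℕ} (α ρ W : ℝ) (hn : 3 ≤ n) (hα1 : α < 2)
    (hα2 : 0 < (n : ℝ) + α - 4) (hρ : 0 < ρ) (hW : 0 < W)
    (X : Fin n → ℝ) (hX : ∑ i, X i ^ 2 = ρ) (v L : ℂ) (p q : Fin n → ℂ) (hL : ∑ i, q i = L) :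
    (((n : ℝ) + α - 4) ^ 2 * ((n : ℝ) - α) ^ 2 / 16) * (W * ‖v‖ ^ 2) ≤
      W * ρ ^ 2 * ‖L‖ ^ 2 + ((n : ℝ) + α - 4) * ((n : ℝ) - α) / 2 *
        ∑ i, ((α - 4) * X i * W / ρ * (ρ * inner ℝ v (p i) + ((n : ℝ) - 2) / 2 *
            (X i * ‖v‖ ^ 2)) +
          W * (2 * X i * inner ℝ v (p i) + ρ * (‖p i‖ ^ 2 + inner ℝ v (q i)) +
            ((n : ℝ) - 2) / 2 * (‖v‖ ^ 2 + X i * (2 * inner ℝ v (p i))))) := by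
  have hn' : (3 : ℝ) ≤ n := by exact_mod_cast hn
  set R : ℝ := ∑ i, X i * inner ℝ v (p i) with hR
  set G : ℝ := ∑ i, ‖p i‖ ^ 2 with hG
  have hvL : ∑ i, inner ℝ v (q i) = inner ℝ v L := by rw [← hL, inner_sum]
  have hsum : ∑ i, ((α - 4) * X i * W / ρ * (ρ * inner ℝ v (p i) + ((n : ℝ) - 2) / 2 *
            (X i * ‖v‖ ^ 2)) +
          W * (2 * X i * inner ℝ v (p i) + ρ * (‖p i‖ ^ 2 + inner ℝ v (q i)) +
            ((n : ℝ) - 2) / 2 * (‖v‖ ^ 2 + X i * (2 * inner ℝ v (p i))))) =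
      W * ((α - 4) * R + (α - 4) * (((n : ℝ) - 2) / 2) * ‖v‖ ^ 2 + 2 * R +
        ρ * (G + inner ℝ v L) + ((n : ℝ) - 2) / 2 * (n * ‖v‖ ^ 2 + 2 * R)) := by
    have hterm : ∀ i, ((α - 4) * X i * W / ρ * (ρ * inner ℝ v (p i) + ((n : ℝ) - 2) / 2 *
            (X i * ‖v‖ ^ 2)) +
          W * (2 * X i * inner ℝ v (p i) + ρ * (‖p i‖ ^ 2 + inner ℝ v (q i)) +
            ((n : ℝ) - 2) / 2 * (‖v‖ ^ 2 + X i * (2 * inner ℝ v (p i))))) =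
        W * ((α - 2) + ((n : ℝ) - 2)) * (X i * inner ℝ v (p i)) +
        W * (α - 4) / ρ * (((n : ℝ) - 2) / 2) * ‖v‖ ^ 2 * X i ^ 2 +
        W * ρ * ‖p i‖ ^ 2 + W * ρ * inner ℝ v (q i) + W * (((n : ℝ) - 2) / 2) * ‖v‖ ^ 2 := by
      intro i
      field_simp
      ring
    rw [Finset.sum_congr rfl fun i _ => hterm i]
    simp only [Finset.sum_add_distrib, ← Finset.mul_sum, hX, hvL, ← hR, ← hG]
    simp only [Finset.sum_const, Finset.card_univ, Fintype.card_fin, nsmul_eq_mul]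
    field_simp
    ring
  rw [hsum]
  have h1 : 0 ≤ ρ ^ 2 * ‖L‖ ^ 2 +
      2 * (((n : ℝ) + α - 4) * ((n : ℝ) - α) / 4) * ρ * inner ℝ v L +
      (((n : ℝ) + α - 4) * ((n : ℝ) - α) / 4) ^ 2 * ‖v‖ ^ 2 := by
    have h := sq_nonneg ‖ρ • L + (((n : ℝ) + α - 4) * ((n : ℝ) - α) / 4) • v‖
    rw [norm_add_sq_real, norm_smul, norm_smul, mul_pow, mul_pow, Real.norm_eq_abs,
      Real.norm_eq_abs, sq_abs, sq_abs, real_inner_smul_left, real_inner_smul_right,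
      real_inner_comm] at h
    linarith
  have h2 : 0 ≤ ρ * G + ((n : ℝ) + α - 4) * R + (((n : ℝ) + α - 4) / 2) ^ 2 * ‖v‖ ^ 2 := by
    have h : 0 ≤ ∑ i, ‖ρ • p i + (((n : ℝ) + α - 4) / 2 * X i) • v‖ ^ 2 :=
      Finset.sum_nonneg fun i _ => sq_nonneg _
    have hterm : ∀ i, ‖ρ • p i + (((n : ℝ) + α - 4) / 2 * X i) • v‖ ^ 2 =
        ρ ^ 2 * ‖p i‖ ^ 2 + ρ * ((n : ℝ) + α - 4) * (X i * inner ℝ v (p i)) +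
        (((n : ℝ) + α - 4) / 2) ^ 2 * ‖v‖ ^ 2 * X i ^ 2 := by
      intro i
      rw [norm_add_sq_real, norm_smul, norm_smul, mul_pow, mul_pow, Real.norm_eq_abs,
        Real.norm_eq_abs, sq_abs, sq_abs, real_inner_smul_left, real_inner_smul_right,
        real_inner_comm]
      ring
    rw [Finset.sum_congr rfl fun i _ => hterm i] at h
    simp only [Finset.sum_add_distrib, ← Finset.mul_sum, hX, ← hR, ← hG] at h
    refine (mul_nonneg_iff_of_pos_left hρ).1 ?_
    linarith
  have hc : 0 ≤ ((n : ℝ) + α - 4) * ((n : ℝ) - α) / 2 := by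
    have : 0 < (n : ℝ) - α := by linarith
    positivity
  have h3 := mul_nonneg hW.le (add_nonneg h1 (mul_nonneg hc h2))
  linarith

variable {n : ℕ} {α : ℝ} {u : EuclideanSpace ℝ (Fin n) → ℂ}

lemma contDiff_partial (hu : ContDiff ℝ (⊤ : ℕ∞) u) (e : EuclideanSpace ℝ (Fin n)) :
    ContDiff ℝ (⊤ : ℕ∞) fun y => fderiv ℝ u y e :=
  (hu.fderiv_right (m := (⊤ : ℕ∞)) (by simp)).clm_apply contDiff_const

lemma contDiff_lap (hu : ContDiff ℝ (⊤ : ℕ∞) u) : ContDiff ℝ (⊤ : ℕ∞) (lap u) :=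
  ContDiff.sum fun _ _ => contDiff_partial (contDiff_partial hu _) _

lemma lap_eq_zero {x : EuclideanSpace ℝ (Fin n)} (hx : x ∉ tsupport u) : lap u x = 0 := by
  refine Finset.sum_eq_zero fun i _ => ?_
  have : (fun y => fderiv ℝ u y (EuclideanSpace.single i 1)) =ᶠ[nhds x] fun _ => 0 := by
    filter_upwards [(isClosed_tsupport u).isOpen_compl.mem_nhds hx] with y hy
    rw [fderiv_of_notMem_tsupport (𝕜 := ℝ) hy]; simp
  rw [this.fderiv_eq]; simp

lemma fluxField_eq_zero {x : EuclideanSpace ℝ (Fin n)} (hx : x ∉ tsupport u) (i : Fin n) :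
    fluxField α u i x = 0 := by
  simp [fluxField, image_eq_zero_of_notMem_tsupport hx]

lemma fluxField_contDiff (hu : ContDiff ℝ (⊤ : ℕ∞) u) (hcs : HasCompactSupport u)
    (hsupp : (0 : EuclideanSpace ℝ (Fin n)) ∉ tsupport u) (i : Fin n) :
    ContDiff ℝ 1 (fluxField α u i) ∧ HasCompactSupport (fluxField α u i) := by
  refine contDiff_of_vanish hcs hsupp (fun x hx => ?_) fun x hx => fluxField_eq_zero hx i
  have hu1 : ContDiff ℝ 1 u := hu.of_le (by exact_mod_cast le_top)
  have hp : ContDiff ℝ 1 fun y => fderiv ℝ u y (EuclideanSpace.single i 1) :=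
    (contDiff_partial hu _).of_le (by exact_mod_cast le_top)
  have hρ : ContDiff ℝ 1 fun y : EuclideanSpace ℝ (Fin n) => ‖y‖ ^ 2 := contDiff_norm_sq ℝ
  have hXi : ContDiff ℝ 1 fun y : EuclideanSpace ℝ (Fin n) => y i := by fun_prop
  refine ContDiffAt.mul (hρ.contDiffAt.rpow_const_of_ne (by simpa using hx)) (ContDiff.contDiffAt ?_)
  exact (hρ.mul (hu1.inner ℝ hp)).add (contDiff_const.mul (hXi.mul (hu1.norm_sq ℝ)))

lemma fderiv_fluxField (hu : ContDiff ℝ (⊤ : ℕ∞) u) {x : EuclideanSpace ℝ (Fin n)} (hx : x ≠ 0)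
    (i : Fin n) :
    fderiv ℝ (fluxField α u i) x (EuclideanSpace.single i 1) =
      (α - 4) * x i * (‖x‖ ^ 2) ^ ((α - 4) / 2) / ‖x‖ ^ 2 *
        (‖x‖ ^ 2 * inner ℝ (u x) (fderiv ℝ u x (EuclideanSpace.single i 1)) +
          ((n : ℝ) - 2) / 2 * (x i * ‖u x‖ ^ 2)) +
      (‖x‖ ^ 2) ^ ((α - 4) / 2) *
        (2 * x i * inner ℝ (u x) (fderiv ℝ u x (EuclideanSpace.single i 1)) +
          ‖x‖ ^ 2 * (‖fderiv ℝ u x (EuclideanSpace.single i 1)‖ ^ 2 +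
            inner ℝ (u x) (fderiv ℝ (fun y => fderiv ℝ u y (EuclideanSpace.single i 1)) x
              (EuclideanSpace.single i 1))) +
          ((n : ℝ) - 2) / 2 * (‖u x‖ ^ 2 +
            x i * (2 * inner ℝ (u x) (fderiv ℝ u x (EuclideanSpace.single i 1))))) := by
  have hρ0 : ‖x‖ ^ 2 ≠ 0 := by simpa using hx
  have hu1 : HasFDerivAt u (fderiv ℝ u x) x := (hu.differentiable (by simp) x).hasFDerivAt
  have hp := ((contDiff_partial hu (EuclideanSpace.single i 1)).differentiable
    (by simp) x).hasFDerivAt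
  have hρ := (hasFDerivAt_id x).norm_sq
  have hW := hρ.rpow_const (p := (α - 4) / 2) (Or.inl hρ0)
  have hXi := (EuclideanSpace.proj i : EuclideanSpace ℝ (Fin n) →L[ℝ] ℝ).hasFDerivAt (x := x)
  have h := hW.mul ((hρ.mul (hu1.inner ℝ hp)).add
    ((hXi.mul hu1.norm_sq).const_mul (((n : ℝ) - 2) / 2)))
  have h' : HasFDerivAt (fluxField α u i) _ x := h
  rw [h'.fderiv]
  have hpow : (‖x‖ ^ 2) ^ ((α - 4) / 2 - 1) = (‖x‖ ^ 2) ^ ((α - 4) / 2) / ‖x‖ ^ 2 := by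
    rw [Real.rpow_sub_one hρ0]
  have hxi : inner ℝ x (EuclideanSpace.single i (1 : ℝ)) = x i := by
    simp [EuclideanSpace.inner_single_right]
  simp [fderivInnerCLM_apply, hpow, hxi, -Complex.inner]
  ring

/-- The pointwise inequality whose integral is the theorem. -/
lemma kombe_pointwise (hn : 3 ≤ n) (hα1 : α < 2) (hα2 : 0 < (n : ℝ) + α - 4)
    (hu : ContDiff ℝ (⊤ : ℕ∞) u) (hsupp : (0 : EuclideanSpace ℝ (Fin n)) ∉ tsupport u)
    (x : EuclideanSpace ℝ (Fin n)) :
    (((n : ℝ) + α - 4) ^ 2 * ((n : ℝ) - α) ^ 2 / 16) * (‖x‖ ^ (α - 4) * ‖u x‖ ^ 2) ≤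
      ‖x‖ ^ α * ‖lap u x‖ ^ 2 + ((n : ℝ) + α - 4) * ((n : ℝ) - α) / 2 *
        ∑ i, fderiv ℝ (fluxField α u i) x (EuclideanSpace.single i 1) := by
  by_cases hx : x = 0
  · have hx' : x ∉ tsupport u := by rw [hx]; exact hsupp
    have hz : ∀ i, fderiv ℝ (fluxField α u i) x = 0 := fun i => by
      have : fluxField α u i =ᶠ[nhds x] fun _ => 0 := by
        filter_upwards [(isClosed_tsupport u).isOpen_compl.mem_nhds hx'] with y hy
        exact fluxField_eq_zero hy i
      rw [this.fderiv_eq]; simp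
    simp [hz, lap_eq_zero hx', image_eq_zero_of_notMem_tsupport hx']
  · have hr : 0 < ‖x‖ := norm_pos_iff.2 hx
    have hW : ‖x‖ ^ (α - 4) = (‖x‖ ^ 2) ^ ((α - 4) / 2) := by
      rw [← Real.rpow_natCast, ← Real.rpow_mul hr.le]; congr 1; push_cast; ring
    have hWα : ‖x‖ ^ α = (‖x‖ ^ 2) ^ ((α - 4) / 2) * (‖x‖ ^ 2) ^ 2 := by
      rw [← hW, ← pow_mul, ← Real.rpow_natCast, ← Real.rpow_add hr]; congr 1; push_cast; ring
    rw [hW, hWα, Finset.sum_congr rfl fun i _ => fderiv_fluxField hu hx i]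
    exact pointwise_ineq α (‖x‖ ^ 2) _ hn hα1 hα2 (by positivity) (by positivity) x
      (EuclideanSpace.real_norm_sq_eq x).symm (u x) (lap u x) _ _ rfl

lemma integrable_weight (s : ℝ)
    (hcs : HasCompactSupport u) (hsupp : (0 : EuclideanSpace ℝ (Fin n)) ∉ tsupport u)
    {f : EuclideanSpace ℝ (Fin n) → ℂ} (hf : ContDiff ℝ (⊤ : ℕ∞) f)
    (hv : ∀ x, x ∉ tsupport u → f x = 0) :
    Integrable fun x : EuclideanSpace ℝ (Fin n) => ‖x‖ ^ s * ‖f x‖ ^ 2 := by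
  have h := contDiff_of_vanish (k := 0) (F := fun x => ‖x‖ ^ s * ‖f x‖ ^ 2) hcs hsupp
    (fun x hx => ?_) fun x hx => by simp [hv x hx]
  · exact h.1.continuous.integrable_of_hasCompactSupport h.2
  · exact ((contDiffAt_norm ℝ hx).rpow_const_of_ne (norm_ne_zero_iff.2 hx)).mul
      ((hf.of_le (by simp)).norm_sq ℝ).contDiffAt

/-- The integral of a partial derivative of a compactly supported `C¹` function is zero. -/
lemma integral_fderiv_compact {F : EuclideanSpace ℝ (Fin n) → ℝ} (hF : ContDiff ℝ 1 F)
    (hc : HasCompactSupport F) (e : EuclideanSpace ℝ (Fin n)) :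
    Integrable (fun x => fderiv ℝ F x e) ∧ ∫ x, fderiv ℝ F x e = 0 := by
  have hint : Integrable (fun x => fderiv ℝ F x e) :=
    (((hF.continuous_fderiv (by simp)).clm_apply continuous_const)).integrable_of_hasCompactSupport
      (hc.fderiv_apply ℝ e)
  refine ⟨hint, ?_⟩
  have h := integral_mul_fderiv_eq_neg_fderiv_mul_of_integrable (μ := volume)
    (f := fun _ : EuclideanSpace ℝ (Fin n) => (1 : ℝ)) (g := F) (v := e)
    (by simp) (by simpa using hint)
    (by simpa using hF.continuous.integrable_of_hasCompactSupport hc)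
    (fun _ _ => by fun_prop) (fun x _ => hF.differentiable (by simp) x)
  simpa using h

theorem kombe_rellich (n : ℕ) (hn : 3 ≤ n) (α : ℝ) (hα1 : α < 2)
    (hα2 : 0 < (n : ℝ) + α - 4)
    (u : EuclideanSpace ℝ (Fin n) → ℂ) (hu : ContDiff ℝ (⊤ : ℕ∞) u) (hcs : HasCompactSupport u)
    (hsupp : (0 : EuclideanSpace ℝ (Fin n)) ∉ tsupport u) :
    (((n : ℝ) + α - 4) ^ 2 * ((n : ℝ) - α) ^ 2 / 16) * ∫ x, ‖x‖ ^ (α - 4) * ‖u x‖ ^ 2 ≤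
      ∫ x, ‖x‖ ^ α * ‖lap u x‖ ^ 2 := by
  have hdiv := fun i : Fin n =>
    integral_fderiv_compact (fluxField_contDiff (α := α) hu hcs hsupp i).1
      (fluxField_contDiff hu hcs hsupp i).2 (EuclideanSpace.single i 1)
  have hint1 := integrable_weight (α - 4) hcs hsupp hu
    fun x hx => image_eq_zero_of_notMem_tsupport hx
  have hint2 := integrable_weight α hcs hsupp (contDiff_lap hu) fun x hx => lap_eq_zero hx
  have hint3 : Integrable fun x => ((n : ℝ) + α - 4) * ((n : ℝ) - α) / 2 *
      ∑ i, fderiv ℝ (fluxField α u i) x (EuclideanSpace.single i 1) :=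
    (integrable_finsetSum _ fun i _ => (hdiv i).1).const_mul _
  have h := integral_mono (hint1.const_mul _) (hint2.add hint3)
    (kombe_pointwise hn hα1 hα2 hu hsupp)
  simp only [Pi.add_apply] at h
  rw [integral_const_mul, integral_add hint2 hint3, integral_const_mul,
    integral_finsetSum _ fun i _ => (hdiv i).1, Finset.sum_eq_zero fun i _ => (hdiv i).2] at h
  simpa using h
end
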